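/- Let n be a positive integer. There exist a field K of characteristic zero and an associative unital K-algebra A which is a division ring with center equal to K and of dimension 9 over K, such that the group Aˣ/Kˣ contains an element of order n, if and only if n is not divisible by 9 and every prime divisor of n is either 3 or congruent to 1 modulo 3. -/

import Mathlib

/-- The central subgroup `Kˣ ⊆ Aˣ`: the units of `A` lying in the image of the structure map
`K → A`. -/
def centralUnits (K A : Type*) [Field K] [DivisionRing A] [Algebra K A] : Subgroup Aˣ :=
  (Units.map (algebraMap K A).toMonoidHom).range

instance centralUnits_normal (K A : Type*) [Field K] [DivisionRing A] [Algebra K A] :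
    (centralUnits K A).Normal := by
  constructor
  intro x hx g
  obtain ⟨k, hk⟩ := hx
  have hx' : (x : A) = algebraMap K A (k : K) := by rw [← hk]; rfl
  have h1 : g * x = x * g := by
    apply Units.ext
    rw [Units.val_mul, Units.val_mul, hx']
    exact (Algebra.commutes (k : K) (g : A)).symm
  have h2 : g * x * g⁻¹ = x := by rw [h1, mul_inv_cancel_right]
  rw [h2]
  exact ⟨k, hk⟩

/-- A central division algebra of dimension `9` over a field `K` of characteristic zero:
the data of a field `K` of characteristic zero and an associative unital `K`-algebra `A`
which is a division ring, has center equal to `K`, and has dimension `9` over `K`. Such an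
algebra corresponds to a non-trivial Severi–Brauer surface `S` over `K`, with
`Aut(S) ≅ Aˣ/Kˣ`. -/
structure CentralDivAlgChar0 where
  K : Type
  A : Type
  [fieldK : Field K]
  [charZeroK : CharZero K]
  [divisionRingA : DivisionRing A]
  [algebraKA : Algebra K A]
  center_eq_bot : Subalgebra.center K A = ⊥
  finrank_eq_nine : Module.finrank K A = 9

attribute [instance] CentralDivAlgChar0.fieldK CentralDivAlgChar0.charZeroK
  CentralDivAlgChar0.divisionRingA CentralDivAlgChar0.algebraKA

/-- The quotient group `Aˣ/Kˣ`, isomorphic to the automorphism group of the corresponding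
Severi–Brauer surface. -/
abbrev CentralDivAlgChar0.Q (D : CentralDivAlgChar0) : Type :=
  (D.A)ˣ ⧸ centralUnits D.K D.A

open Polynomial in
/-- In a central division algebra of dimension `9`, every non-central element generates a cubic
extension of the base field. -/
theorem natDegree_minpoly_eq_three {K A : Type*} [Field K] [DivisionRing A] [Algebra K A]
    (hc : Subalgebra.center K A = ⊥) (h9 : Module.finrank K A = 9) {y : A}
    (hy : y ∉ (algebraMap K A).range) : (minpoly K y).natDegree = 3 := by
  have : FiniteDimensional K A := .of_finrank_pos (by omega)
  have hint : IsIntegral K y := .of_finite K y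
  have : Fact (Irreducible (minpoly K y)) := ⟨minpoly.irreducible hint⟩
  let E := AdjoinRoot (minpoly K y)
  let f : E →+* A := Ideal.Quotient.lift _ (aeval (R := K) y).toRingHom (by
    intro g hg
    obtain ⟨q, rfl⟩ := Ideal.mem_span_singleton.1 hg
    simp)
  have hf : ∀ k : K, f (algebraMap K E k) = algebraMap K A k := fun k ↦
    (Ideal.Quotient.lift_mk _ _ _).trans (aeval_C (A := A) y k)
  have hroot : f (AdjoinRoot.root _) = y :=
    (Ideal.Quotient.lift_mk _ _ _).trans (aeval_X (R := K) y)
  have hE : Module.finrank K E = (minpoly K y).natDegree :=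
    (AdjoinRoot.powerBasis (minpoly.ne_zero hint)).finrank
  have hmul : Module.finrank K E ∣ 9 := by
    let : Module E A := Module.compHom A f
    have : IsScalarTower K E A := ⟨fun k e a ↦ by
      change f (k • e) * a = k • (f e * a)
      rw [Algebra.smul_def, map_mul, hf, Algebra.smul_def, mul_assoc]⟩
    exact ⟨_, (h9.symm.trans (Module.finrank_mul_finrank K E A).symm)⟩
  rw [hE] at hmul
  have h1 : (minpoly K y).natDegree ≠ 1 := fun h ↦ hy <| by
    simpa using minpoly.mem_range_of_degree_eq_one K y
      ((degree_eq_iff_natDegree_eq (minpoly.ne_zero hint)).2 h)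
  have h9' : (minpoly K y).natDegree ≠ 9 := fun h ↦ by
    let g : E →ₗ[K] A :=
      { toFun := f
        map_add' := map_add f
        map_smul' := fun k e ↦ by
          rw [Algebra.smul_def, map_mul, hf, RingHom.id_apply, Algebra.smul_def] }
    have : FiniteDimensional K E := .of_finrank_pos (by omega)
    have hsurj : Function.Surjective g :=
      (LinearMap.injective_iff_surjective_of_finrank_eq_finrank (by omega)).1 f.injective
    have htop : Subalgebra.center K A = ⊤ := by
      refine eq_top_iff.2 fun a _ ↦ Subalgebra.mem_center_iff.2 fun b ↦ ?_
      obtain ⟨a, rfl⟩ := hsurj a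
      obtain ⟨b, rfl⟩ := hsurj b
      change f b * f a = f a * f b
      rw [← map_mul, mul_comm, map_mul]
    have hbt := Subalgebra.bot_eq_top_iff_finrank_eq_one.1 (hc.symm.trans htop)
    omega
  have : (minpoly K y).natDegree ∈ Nat.divisors 9 := Nat.mem_divisors.2 ⟨hmul, by norm_num⟩
  rw [show Nat.divisors 9 = {1, 3, 9} by decide] at this
  simp only [Finset.mem_insert, Finset.mem_singleton] at this
  tauto

open Polynomial in
theorem minpoly_natDegree_eq_of_pow_eq {K A : Type*} [Field K] [DivisionRing A] [Algebra K A]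
    {y : A} {n : ℕ} (hn : 0 < n) {b : K} (hirr : Irreducible (X ^ n - C b))
    (hy : y ^ n = algebraMap K A b) : (minpoly K y).natDegree = n := by
  rw [← minpoly.eq_of_irreducible_of_monic hirr (by simp [hy]) (monic_X_pow_sub_C b hn.ne'),
    natDegree_X_pow_sub_C]

/-- A prime `p` which is the order of an element generating a cubic extension is `1` modulo `3`. -/
theorem mod_three_eq_one_of_pow_eq_one {K A : Type*} [Field K] [CharZero K] [DivisionRing A]
    [Algebra K A] {z : A} {p : ℕ} (hp : p.Prime) (hz : z ^ p = 1)
    (h3 : (minpoly K z).natDegree = 3) : p % 3 = 1 := by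
  have hint : IsIntegral K z := by
    by_contra h
    simp [minpoly.eq_zero h] at h3
  have : Fact (Irreducible (minpoly K z)) := ⟨minpoly.irreducible hint⟩
  have : Fact p.Prime := ⟨hp⟩
  let E := AdjoinRoot (minpoly K z)
  let r : E := AdjoinRoot.root _
  have hE : Module.finrank K E = 3 :=
    (AdjoinRoot.powerBasis (minpoly.ne_zero hint)).finrank.trans h3
  have hrp : r ^ p = 1 := by
    have hd : minpoly K z ∣ Polynomial.X ^ p - 1 := minpoly.dvd K z (by simp [hz])
    have := AdjoinRoot.mk_eq_zero.2 hd
    simpa [sub_eq_zero] using this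
  have hgen : Algebra.adjoin K {r} = ⊤ := AdjoinRoot.adjoinRoot_eq_top
  have hr1 : r ≠ 1 := fun h ↦ by
    rw [h, Algebra.adjoin_singleton_one] at hgen
    have := Subalgebra.bot_eq_top_iff_finrank_eq_one.1 hgen
    omega
  have hr : IsPrimitiveRoot r p := orderOf_eq_prime hrp hr1 ▸ IsPrimitiveRoot.orderOf r
  have : IsCyclotomicExtension {p} K E := by
    have := hr.adjoin_isCyclotomicExtension K
    exact IsCyclotomicExtension.equiv {p} K _
      ((Subalgebra.equivOfEq _ _ hgen).trans Subalgebra.topEquiv)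
  have : IsGalois K E := IsCyclotomicExtension.isGalois {p} K E
  have : FiniteDimensional K E := .of_finrank_pos (by omega)
  have hcard : Nat.card (E ≃ₐ[K] E) ∣ Nat.card (ZMod p)ˣ :=
    Subgroup.card_dvd_of_injective _ (hr.autToPow_injective K)
  rw [IsGalois.card_aut_eq_finrank, hE, Nat.card_eq_fintype_card, ZMod.card_units] at hcard
  have := hp.two_le
  omega

theorem mk_pow_eq_one_iff {K A : Type*} [Field K] [DivisionRing A] [Algebra K A] (x : Aˣ)
    (k : ℕ) : (QuotientGroup.mk x : Aˣ ⧸ centralUnits K A) ^ k = 1 ↔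
      (x : A) ^ k ∈ (algebraMap K A).range := by
  rw [← QuotientGroup.mk_pow, QuotientGroup.eq_one_iff]
  constructor
  · rintro ⟨c, hc⟩
    exact ⟨c, by rw [← Units.val_pow_eq_pow_val, ← hc]; rfl⟩
  · rintro ⟨c, hc⟩
    have hc0 : c ≠ 0 := by
      rintro rfl
      exact (x ^ k).ne_zero (by rw [Units.val_pow_eq_pow_val, ← hc, map_zero])
    exact ⟨Units.mk0 c hc0, Units.ext (by rw [Units.val_pow_eq_pow_val, ← hc]; rfl)⟩

/-- Normalising a root `y` of a `p`-th power of the base field to a `p`-th root of unity. -/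
theorem exists_pow_eq_one_of_pow_eq {K A : Type*} [Field K] [DivisionRing A] [Algebra K A]
    {y : A} (hy : y ∉ (algebraMap K A).range) {p : ℕ}
    (hp : 0 < p) {c : K} (hb : y ^ p = algebraMap K A (c ^ p)) :
    ∃ z : A, z ∉ (algebraMap K A).range ∧ z ^ p = 1 := by
  have hc0 : c ≠ 0 := by
    rintro rfl
    rw [zero_pow hp.ne', map_zero] at hb
    exact hy (by rw [eq_zero_of_pow_eq_zero hb]; exact zero_mem _)
  refine ⟨algebraMap K A c⁻¹ * y, fun ⟨d, hd⟩ ↦ hy ⟨c * d, ?_⟩, ?_⟩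
  · rw [map_mul, hd, ← mul_assoc, ← map_mul, mul_inv_cancel₀ hc0, map_one, one_mul]
  · rw [Commute.mul_pow (Algebra.commutes _ y), ← map_pow, hb, ← map_mul, inv_pow,
      inv_mul_cancel₀ (pow_ne_zero p hc0), map_one]

theorem eq_three_or_mod_three_eq_one_of_pow_mem {K A : Type*} [Field K] [CharZero K] [DivisionRing A] [Algebra K A]
    (hc : Subalgebra.center K A = ⊥) (h9 : Module.finrank K A = 9)
    {y : A} {p : ℕ} (hp : p.Prime)
    (hy : y ∉ (algebraMap K A).range) (hyp : y ^ p ∈ (algebraMap K A).range) :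
    p = 3 ∨ p % 3 = 1 := by
  obtain ⟨b, hb⟩ := hyp
  by_cases h : ∃ c : K, c ^ p = b
  · obtain ⟨c, rfl⟩ := h
    obtain ⟨z, hz, hz1⟩ := exists_pow_eq_one_of_pow_eq hy hp.pos hb.symm
    exact .inr (mod_three_eq_one_of_pow_eq_one hp hz1 (natDegree_minpoly_eq_three hc h9 hz))
  · push Not at h
    have := minpoly_natDegree_eq_of_pow_eq hp.pos (X_pow_sub_C_irreducible_of_prime hp h) hb.symm
    exact .inl (this.symm.trans (natDegree_minpoly_eq_three hc h9 hy))

open Polynomial in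
theorem pow_three_mem_of_pow_nine_mem {K A : Type*} [Field K] [CharZero K] [DivisionRing A] [Algebra K A]
    (hc : Subalgebra.center K A = ⊥) (h9 : Module.finrank K A = 9)
    {y : A} (hy : y ^ 9 ∈ (algebraMap K A).range) :
    y ^ 3 ∈ (algebraMap K A).range := by
  by_contra hy3
  have hy1 : y ∉ (algebraMap K A).range := fun h ↦ hy3 (pow_mem h 3)
  obtain ⟨b, hb⟩ := hy
  by_cases h : ∃ c : K, c ^ 3 = b
  · obtain ⟨c, rfl⟩ := h
    rw [pow_mul y 3 3] at hb
    obtain ⟨z, hz, hz1⟩ := exists_pow_eq_one_of_pow_eq hy3 (by norm_num) hb.symm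
    have hz0 : z - 1 ≠ 0 := fun h ↦ hz (by rw [sub_eq_zero.1 h]; exact one_mem _)
    have hz2 : z ^ 2 + z + 1 = 0 := (mul_eq_zero.1 (show (z - 1) * (z ^ 2 + z + 1) = 0 by
      rw [show (z - 1) * (z ^ 2 + z + 1) = z ^ 3 - 1 by noncomm_ring, hz1, sub_self])).resolve_left hz0
    have hdeg : (X ^ 2 + X + 1 : K[X]).natDegree = 2 := by compute_degree!
    have h0 : (X ^ 2 + X + 1 : K[X]) ≠ 0 := fun h ↦ by simp [h] at hdeg
    have := natDegree_le_of_dvd (minpoly.dvd K z (p := X ^ 2 + X + 1) (by simpa using hz2)) h0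
    rw [natDegree_minpoly_eq_three hc h9 hz] at this
    omega
  · push Not at h
    have := minpoly_natDegree_eq_of_pow_eq (n := 3 ^ 2) (by norm_num)
      (X_pow_sub_C_irreducible_of_prime_pow Nat.prime_three (by norm_num) 2 h) hb.symm
    rw [natDegree_minpoly_eq_three hc h9 hy1] at this
    omega

theorem orderOf_restriction {K A : Type*} [Field K] [CharZero K] [DivisionRing A] [Algebra K A]
    (hc : Subalgebra.center K A = ⊥) (h9 : Module.finrank K A = 9)
    {g : Aˣ ⧸ centralUnits K A} {n : ℕ} (hn : 0 < n)
    (hg : orderOf g = n) : ¬ 9 ∣ n ∧ ∀ p : ℕ, p.Prime → p ∣ n → p = 3 ∨ p % 3 = 1 := by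
  obtain ⟨x, rfl⟩ := QuotientGroup.mk_surjective g
  have key (k : ℕ) : (x : A) ^ k ∈ (algebraMap K A).range ↔ n ∣ k := by
    rw [← mk_pow_eq_one_iff, ← orderOf_dvd_iff_pow_eq_one, hg]
  refine ⟨fun ⟨m, hm⟩ ↦ ?_, fun p hp ⟨m, hm⟩ ↦ ?_⟩
  · have h := pow_three_mem_of_pow_nine_mem (y := (x : A) ^ m) hc h9 (by
      rw [← pow_mul, key, hm, mul_comm])
    rw [← pow_mul, key] at h
    have := Nat.le_of_dvd (by omega) h
    omega
  · refine eq_three_or_mod_three_eq_one_of_pow_mem (y := (x : A) ^ m) hc h9 hp ?_ ?_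
    · rw [key]
      intro h
      have hm0 : 0 < m := Nat.pos_of_ne_zero (by rintro rfl; omega)
      have := Nat.le_of_dvd hm0 h
      have := hp.two_le
      nlinarith
    · rw [← pow_mul, key, hm, mul_comm]

/-- The data needed to form the cyclic algebra `F ⊕ F u ⊕ F u²`, `u f = σ(f) u`, `u³ = t`, in which
every nonzero element has nonzero reduced norm. -/
structure CubicCyclicDatum (F : Type*) [Field F] where
  σ : F ≃+* F
  t : F
  cube : ∀ x, σ (σ (σ x)) = x
  fixed : σ t = t
  ne_one : σ ≠ 1
  eq_zero_of_norm : ∀ a b c : F, a * σ a * σ (σ a) + t * (b * σ b * σ (σ b))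
    + t ^ 2 * (c * σ c * σ (σ c)) - t * (a * σ b * σ (σ c) + σ a * σ (σ b) * c
    + σ (σ a) * b * σ c) = 0 → a = 0 ∧ b = 0 ∧ c = 0

namespace CubicCyclicDatum

variable {F : Type*} [Field F] (D : CubicCyclicDatum F)

/-- The fixed field of `σ`, which is the centre of the cyclic algebra. -/
abbrev base : Subfield F :=
  FixedPoints.subfield (Subgroup.zpowers (D.σ : RingAut F)) F

theorem mem_base {x : F} : x ∈ D.base ↔ D.σ x = x := by
  refine ⟨fun h ↦ h ⟨D.σ, Subgroup.mem_zpowers _⟩, fun h ⟨g, hg⟩ ↦ ?_⟩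
  have : Subgroup.zpowers (D.σ : RingAut F) ≤ MulAction.stabilizer (RingAut F) x := by
    rw [Subgroup.zpowers_le]
    exact h
  exact this hg

theorem finrank_base : Module.finrank D.base F = 3 := by
  have ho : orderOf (D.σ : RingAut F) = 3 :=
    orderOf_eq_prime (RingEquiv.ext fun x ↦ D.cube x) D.ne_one
  have : Finite (Subgroup.zpowers (D.σ : RingAut F)) :=
    Nat.finite_of_card_ne_zero (by rw [Nat.card_zpowers, ho]; norm_num)
  have := Fintype.ofFinite (Subgroup.zpowers (D.σ : RingAut F))
  rw [FixedPoints.finrank_eq_card, ← Nat.card_eq_fintype_card, Nat.card_zpowers, ho]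

/-- The cyclic algebra; `⟨a, b, c⟩` stands for `a + b u + c u²`. -/
@[ext]
structure Alg (D : CubicCyclicDatum F) where
  a : F
  b : F
  c : F

attribute [simp] cube fixed

namespace Alg

variable {D}

instance : Zero D.Alg := ⟨⟨0, 0, 0⟩⟩
instance : One D.Alg := ⟨⟨1, 0, 0⟩⟩
instance : Add D.Alg := ⟨fun x y ↦ ⟨x.a + y.a, x.b + y.b, x.c + y.c⟩⟩
instance : Neg D.Alg := ⟨fun x ↦ ⟨-x.a, -x.b, -x.c⟩⟩
instance : Mul D.Alg := ⟨fun x y ↦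
  ⟨x.a * y.a + D.t * (x.b * D.σ y.c + x.c * D.σ (D.σ y.b)),
   x.a * y.b + x.b * D.σ y.a + D.t * (x.c * D.σ (D.σ y.c)),
   x.a * y.c + x.b * D.σ y.b + x.c * D.σ (D.σ y.a)⟩⟩

@[simp] theorem zero_a : (0 : D.Alg).a = 0 := rfl
@[simp] theorem zero_b : (0 : D.Alg).b = 0 := rfl
@[simp] theorem zero_c : (0 : D.Alg).c = 0 := rfl
@[simp] theorem one_a : (1 : D.Alg).a = 1 := rfl
@[simp] theorem one_b : (1 : D.Alg).b = 0 := rfl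
@[simp] theorem one_c : (1 : D.Alg).c = 0 := rfl
@[simp] theorem add_a (x y : D.Alg) : (x + y).a = x.a + y.a := rfl
@[simp] theorem add_b (x y : D.Alg) : (x + y).b = x.b + y.b := rfl
@[simp] theorem add_c (x y : D.Alg) : (x + y).c = x.c + y.c := rfl
@[simp] theorem neg_a (x : D.Alg) : (-x).a = -x.a := rfl
@[simp] theorem neg_b (x : D.Alg) : (-x).b = -x.b := rfl
@[simp] theorem neg_c (x : D.Alg) : (-x).c = -x.c := rfl
@[simp] theorem mul_a (x y : D.Alg) :
    (x * y).a = x.a * y.a + D.t * (x.b * D.σ y.c + x.c * D.σ (D.σ y.b)) := rfl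
@[simp] theorem mul_b (x y : D.Alg) :
    (x * y).b = x.a * y.b + x.b * D.σ y.a + D.t * (x.c * D.σ (D.σ y.c)) := rfl
@[simp] theorem mul_c (x y : D.Alg) :
    (x * y).c = x.a * y.c + x.b * D.σ y.b + x.c * D.σ (D.σ y.a) := rfl

noncomputable instance : Ring D.Alg where
  add_assoc x y z := by ext <;> simp [add_assoc]
  zero_add x := by ext <;> simp
  add_zero x := by ext <;> simp
  add_comm x y := by ext <;> simp [add_comm]
  neg_add_cancel x := by ext <;> simp
  nsmul := nsmulRec
  zsmul := zsmulRec
  left_distrib x y z := by ext <;> simp <;> ring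
  right_distrib x y z := by ext <;> simp <;> ring
  zero_mul x := by ext <;> simp
  mul_zero x := by ext <;> simp
  mul_assoc x y z := by ext <;> simp <;> ring
  one_mul x := by ext <;> simp
  mul_one x := by ext <;> simp

/-- The reduced norm, up to the embedding of `F`. -/
def norm (x : D.Alg) : F :=
  x.a * D.σ x.a * D.σ (D.σ x.a) + D.t * (x.b * D.σ x.b * D.σ (D.σ x.b))
    + D.t ^ 2 * (x.c * D.σ x.c * D.σ (D.σ x.c)) - D.t * (x.a * D.σ x.b * D.σ (D.σ x.c)
    + D.σ x.a * D.σ (D.σ x.b) * x.c + D.σ (D.σ x.a) * x.b * D.σ x.c)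

/-- The reduced adjugate. -/
def adj (x : D.Alg) : D.Alg :=
  ⟨D.σ x.a * D.σ (D.σ x.a) - D.t * (D.σ x.b * D.σ (D.σ x.c)),
   -(x.b * D.σ (D.σ x.a) - D.t * (x.c * D.σ (D.σ x.c))),
   D.σ x.b * x.b - x.c * D.σ x.a⟩

theorem mul_adj (x : D.Alg) : x * x.adj = ⟨x.norm, 0, 0⟩ := by
  ext <;> simp [norm, adj] <;> ring

theorem norm_ne_zero {x : D.Alg} (hx : x ≠ 0) : x.norm ≠ 0 := fun h ↦ hx <| by
  obtain ⟨ha, hb, hc⟩ := D.eq_zero_of_norm _ _ _ h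
  ext <;> simpa

open Classical in
noncomputable instance : DivisionRing D.Alg where
  inv x := if x = 0 then 0 else x.adj * ⟨x.norm⁻¹, 0, 0⟩
  exists_pair_ne := ⟨0, 1, fun h ↦ zero_ne_one (congrArg a h)⟩
  mul_inv_cancel x hx := by
    change x * (if x = 0 then 0 else x.adj * ⟨x.norm⁻¹, 0, 0⟩) = 1
    rw [if_neg hx, ← mul_assoc, mul_adj]
    ext <;> simp [norm_ne_zero hx]
  inv_zero := if_pos rfl
  nnqsmul := _
  nnqsmul_def := fun _ _ ↦ rfl
  qsmul := _
  qsmul_def := fun _ _ ↦ rfl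

noncomputable instance : Algebra D.base D.Alg where
  smul k x := ⟨k * x.a, k * x.b, k * x.c⟩
  algebraMap :=
    { toFun := fun k ↦ ⟨k, 0, 0⟩
      map_one' := rfl
      map_zero' := rfl
      map_add' := fun _ _ ↦ by ext <;> simp
      map_mul' := fun _ _ ↦ by ext <;> simp }
  commutes' k x := by
    have := D.mem_base.1 k.2
    ext <;> simp [this, mul_comm]
  smul_def' k x := by
    change (⟨k * x.a, k * x.b, k * x.c⟩ : D.Alg) = ⟨k, 0, 0⟩ * x
    ext <;> simp

/-- The coordinates of an element of the cyclic algebra. -/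
noncomputable def coords : D.Alg ≃ₗ[D.base] F × F × F where
  toFun x := (x.a, x.b, x.c)
  invFun x := ⟨x.1, x.2.1, x.2.2⟩
  map_add' _ _ := rfl
  map_smul' _ _ := rfl

theorem finrank_eq_nine : Module.finrank D.base D.Alg = 9 := by
  have : FiniteDimensional D.base F := .of_finrank_pos (by rw [D.finrank_base]; norm_num)
  rw [coords.finrank_eq, Module.finrank_prod, Module.finrank_prod, D.finrank_base]

theorem mk_mem_range_iff {x : F} : (⟨x, 0, 0⟩ : D.Alg) ∈ (algebraMap D.base D.Alg).range ↔
    D.σ x = x := by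
  rw [← D.mem_base]
  exact ⟨fun ⟨k, hk⟩ ↦ (show (k : F) = x from congrArg a hk) ▸ k.2, fun h ↦ ⟨⟨x, h⟩, rfl⟩⟩

theorem center_eq_bot : Subalgebra.center D.base D.Alg = ⊥ := by
  refine eq_bot_iff.2 fun x hx ↦ ?_
  rw [Subalgebra.mem_center_iff] at hx
  obtain ⟨f, hf⟩ : ∃ f, D.σ f ≠ f := by
    by_contra! h
    exact D.ne_one (RingEquiv.ext h)
  have hf2 : D.σ (D.σ f) ≠ f := fun h ↦ hf ((congrArg D.σ h).symm.trans (D.cube f))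
  have hb : x.b = 0 := by
    have := congrArg b (hx ⟨f, 0, 0⟩)
    simp [mul_comm f] at this
    grind
  have hc : x.c = 0 := by
    have := congrArg c (hx ⟨f, 0, 0⟩)
    simp [mul_comm f] at this
    grind
  have ha : D.σ x.a = x.a := by
    have := congrArg b (hx ⟨0, 1, 0⟩)
    simpa [hb, hc] using this
  obtain ⟨k, hk⟩ := mk_mem_range_iff.2 ha
  exact ⟨k, hk.trans (by ext <;> simp [hb, hc])⟩

theorem mk_pow (x : F) (k : ℕ) : (⟨x, 0, 0⟩ : D.Alg) ^ k = ⟨x ^ k, 0, 0⟩ := by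
  induction k with
  | zero => simp; rfl
  | succ k ih => rw [pow_succ, ih, pow_succ]; ext <;> simp

end Alg

/-- The cyclic algebra as a central division algebra. -/
noncomputable abbrev toCentralDivAlg {F : Type} [Field F] [CharZero F] (D : CubicCyclicDatum F) :
    CentralDivAlgChar0 where
  K := D.base
  A := D.Alg
  center_eq_bot := Alg.center_eq_bot
  finrank_eq_nine := Alg.finrank_eq_nine

/-- If `σ` scales `x` by a primitive `n`-th root of unity, then the class of `x` has order `n`. -/
theorem exists_orderOf_eq {F : Type} [Field F] [CharZero F] (D : CubicCyclicDatum F) {x ξ : F}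
    (hx : x ≠ 0) {n : ℕ} (hξ : IsPrimitiveRoot ξ n) (h : D.σ x = ξ * x) :
    ∃ g : D.toCentralDivAlg.Q, orderOf g = n := by
  have hx' : (⟨x, 0, 0⟩ : D.Alg) ≠ 0 := fun h ↦ hx (congrArg Alg.a h)
  refine ⟨QuotientGroup.mk (Units.mk0 _ hx'), ?_⟩
  rw [hξ.eq_orderOf]
  refine orderOf_eq_orderOf_iff.2 fun k ↦ ?_
  rw [mk_pow_eq_one_iff, Units.val_mk0, Alg.mk_pow, Alg.mk_mem_range_iff, map_pow, h, mul_pow,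
    mul_eq_right₀ (pow_ne_zero k hx)]

end CubicCyclicDatum

/-- If `v t = 1` and `σ` preserves the valuation ring of `v`, then the reduced norm form of the
cyclic algebra attached to `σ` and `t` is anisotropic. -/
theorem eq_zero_of_cubic_norm_eq_zero {F : Type*} [Field F] (v : AddValuation F (WithTop ℤ))
    (σ : F ≃+* F) {t : F} (ht : v t = 1) (hσt : σ t = t) (hσ : ∀ x, 0 ≤ v x → 0 ≤ v (σ x))
    (a b c : F) (h : a * σ a * σ (σ a) + t * (b * σ b * σ (σ b))
      + t ^ 2 * (c * σ c * σ (σ c)) - t * (a * σ b * σ (σ c) + σ a * σ (σ b) * c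
      + σ (σ a) * b * σ c) = 0) : a = 0 ∧ b = 0 ∧ c = 0 := by
  let R := v.valuationSubring
  have hR (x : F) : x ∈ R ↔ 0 ≤ v x := Iff.rfl
  have htR : t ∈ R := by rw [hR, ht]; exact zero_le_one
  have hσR {x : F} (hx : x ∈ R) : σ x ∈ R := hσ x hx
  have ht0 : t ≠ 0 := by rintro rfl; simp at ht
  have hunit {r : F} (hr : r ∈ R) : 1 + t * r ≠ 0 := fun h0 ↦ by
    have h1 : v (t * r) = 0 := by
      rw [show t * r = -1 by linear_combination h0, v.map_neg, v.map_one]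
    rw [v.map_mul, ht] at h1
    have h2 := (hR r).1 hr
    have : (1 : WithTop ℤ) ≤ 0 := h1 ▸ le_add_of_nonneg_right h2
    exact absurd this (by decide)
  let D (x y : F) : Prop := ∃ r ∈ R, y = x * r
  have trans {x y z : F} : D x y → D y z → D x z := by
    rintro ⟨r, hr, rfl⟩ ⟨s, hs, rfl⟩
    exact ⟨r * s, R.mul_mem _ _ hr hs, mul_assoc _ _ _⟩
  have hD (x : F) : D x (t * x) := ⟨t, htR, mul_comm _ _⟩
  have total (x y : F) : D x y ∨ D (t * y) x := by
    rcases eq_or_ne y 0 with rfl | hy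
    · exact .inl ⟨0, R.zero_mem, by simp⟩
    rcases eq_or_ne x 0 with rfl | hx
    · exact .inr ⟨0, R.zero_mem, by simp⟩
    by_cases hle : y / x ∈ R
    · exact .inl ⟨y / x, hle, by field_simp⟩
    refine .inr ⟨x / (t * y), ?_, by field_simp⟩
    rw [hR, v.map_div] at hle ⊢
    rw [v.map_mul, ht]
    obtain ⟨m, hm⟩ := WithTop.ne_top_iff_exists.1 (v.ne_top_iff.2 hx)
    obtain ⟨n, hn⟩ := WithTop.ne_top_iff_exists.1 (v.ne_top_iff.2 hy)
    rw [← hm, ← hn] at hle ⊢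
    norm_cast at hle ⊢
    omega
  have hσ0 {x : F} : σ x = 0 ↔ x = 0 := map_eq_zero σ
  have case_a (hb : D a b) (hc : D a c) : a = 0 ∧ b = 0 ∧ c = 0 := by
    obtain ⟨r, hr, rfl⟩ := hb
    obtain ⟨s, hs, rfl⟩ := hc
    suffices ha : a = 0 by simp [ha]
    have : a * σ a * σ (σ a) * (1 + t * (r * σ r * σ (σ r) + t * (s * σ s * σ (σ s))
        - (σ r * σ (σ s) + σ (σ r) * s + r * σ s))) = 0 := by
      simp only [map_mul] at h
      linear_combination h
    have hu := hunit (r := r * σ r * σ (σ r) + t * (s * σ s * σ (σ s))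
        - (σ r * σ (σ s) + σ (σ r) * s + r * σ s)) (by
      apply_rules [add_mem, sub_mem, mul_mem])
    simpa [hu, hσ0] using this
  have case_b (ha : D (t * b) a) (hc : D b c) : a = 0 ∧ b = 0 ∧ c = 0 := by
    obtain ⟨r, hr, rfl⟩ := ha
    obtain ⟨s, hs, rfl⟩ := hc
    suffices hb : b = 0 by simp [hb]
    have : t * (b * σ b * σ (σ b)) * (1 + t * (t * (r * σ r * σ (σ r)) + s * σ s * σ (σ s)
        - (r * σ (σ s) + σ r * s + σ (σ r) * σ s))) = 0 := by
      simp only [map_mul, hσt] at h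
      linear_combination h
    have hu := hunit (r := t * (r * σ r * σ (σ r)) + s * σ s * σ (σ s)
        - (r * σ (σ s) + σ r * s + σ (σ r) * σ s)) (by
      apply_rules [add_mem, sub_mem, mul_mem])
    simpa [hu, hσ0, ht0] using this
  have case_c (ha : D (t * c) a) (hb : D (t * c) b) : a = 0 ∧ b = 0 ∧ c = 0 := by
    obtain ⟨r, hr, rfl⟩ := ha
    obtain ⟨s, hs, rfl⟩ := hb
    suffices hc : c = 0 by simp [hc]
    have : t ^ 2 * (c * σ c * σ (σ c)) * (1 + t * (r * σ r * σ (σ r) + t * (s * σ s * σ (σ s))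
        - (r * σ s + σ r * σ (σ s) + σ (σ r) * s))) = 0 := by
      simp only [map_mul, hσt] at h
      linear_combination h
    have hu := hunit (r := r * σ r * σ (σ r) + t * (s * σ s * σ (σ s))
        - (r * σ s + σ r * σ (σ s) + σ (σ r) * s)) (by
      apply_rules [add_mem, sub_mem, mul_mem])
    simpa [hu, hσ0, ht0] using this
  rcases total a b with hab | hab <;> rcases total b c with hbc | hbc <;>
    rcases total a c with hac | hac
  · exact case_a hab hac
  · exact case_a hab (trans hab hbc)
  · exact case_a hab hac
  · exact case_c hac hbc
  · exact case_b hab hbc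
  · exact case_b hab hbc
  · exact case_b hab (trans (hD b) (trans hab hac))
  · exact case_c hac hbc

open HahnSeries in
/-- The automorphism of the field of Laurent series acting on coefficients. -/
noncomputable def laurentMap {L : Type*} [Field L] (σ : L ≃+* L) :
    HahnSeries ℤ L ≃+* HahnSeries ℤ L where
  toFun x := x.map σ
  invFun x := x.map σ.symm
  left_inv x := by ext; simp
  right_inv x := by ext; simp
  map_mul' x y := HahnSeries.map_mul (σ : L →ₙ+* L)
  map_add' x y := HahnSeries.map_add (σ : L →+* L).toAddMonoidHom

theorem coeff_laurentMap {L : Type*} [Field L] (σ : L ≃+* L) (x : HahnSeries ℤ L) (n : ℤ) :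
    (laurentMap σ x).coeff n = σ (x.coeff n) := rfl

theorem laurentMap_single {L : Type*} [Field L] (σ : L ≃+* L) (n : ℤ) (a : L) :
    laurentMap σ (HahnSeries.single n a) = HahnSeries.single n (σ a) :=
  HahnSeries.map_single (σ : L →+* L).toMonoidWithZeroHom.toZeroHom

/-- The generic cyclic algebra over Laurent series attached to an automorphism of order `3`. -/
noncomputable def CubicCyclicDatum.laurent {L : Type*} [Field L] (σ : L ≃+* L)
    (hσ : ∀ x, σ (σ (σ x)) = x) (hne : σ ≠ 1) : CubicCyclicDatum (HahnSeries ℤ L) where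
  σ := laurentMap σ
  t := HahnSeries.single 1 1
  cube x := by
    ext n
    simp only [coeff_laurentMap, hσ]
  fixed := by rw [laurentMap_single, map_one]
  ne_one h := hne <| RingEquiv.ext fun x ↦ by
    have := congrArg (HahnSeries.coeff · 0) (RingEquiv.congr_fun h (HahnSeries.C x))
    simpa [coeff_laurentMap] using this
  eq_zero_of_norm := by
    refine eq_zero_of_cubic_norm_eq_zero (HahnSeries.addVal ℤ L) (laurentMap σ) ?_ ?_ ?_
    · rw [HahnSeries.addVal_apply, HahnSeries.orderTop_single one_ne_zero]; rfl
    · rw [laurentMap_single, map_one]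
    · intro x hx
      rw [HahnSeries.addVal_apply] at hx ⊢
      by_contra! hlt
      obtain ⟨n, hn⟩ := WithTop.ne_top_iff_exists.1 hlt.ne_top
      refine HahnSeries.coeff_orderTop_ne hn.symm ?_
      rw [coeff_laurentMap, HahnSeries.coeff_eq_zero_of_lt_orderTop, map_zero]
      exact (hn ▸ hlt).trans_le hx

theorem ZMod.exists_sq_add_self_add_one_eq_zero_of_prime_pow {p k : ℕ} (hp : p.Prime)
    (hp3 : p % 3 = 1) (hk : 0 < k) : ∃ s : ZMod (p ^ k), s ^ 2 + s + 1 = 0 := by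
  have : Fact p.Prime := ⟨hp⟩
  have : Fact (1 < p ^ k) := ⟨Nat.one_lt_pow hk.ne' hp.one_lt⟩
  have : NeZero (p ^ k) := ⟨(pow_pos hp.pos k).ne'⟩
  obtain ⟨g, hg⟩ := exists_prime_orderOf_dvd_card (G := (ZMod (p ^ k))ˣ) 3 (by
    rw [ZMod.card_units_eq_totient, Nat.totient_prime_pow hp hk]
    exact Dvd.dvd.mul_left (by omega) _)
  have : IsLocalRing (ZMod (p ^ k)) :=
    .of_surjective' (PadicInt.toZModPow (p := p) k) (ZMod.ringHom_surjective _)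
  have h3 : IsUnit (3 : ZMod (p ^ k)) := by
    have : IsUnit ((3 : ℕ) : ZMod (p ^ k)) := by
      rw [ZMod.isUnit_iff_coprime]
      refine Nat.Coprime.pow_right k ((Nat.coprime_primes Nat.prime_three hp).2 ?_)
      omega
    simpa using this
  have hg3 : ((g : ZMod (p ^ k)) - 1) * (g ^ 2 + g + 1) = 0 := by
    have : (g : ZMod (p ^ k)) ^ 3 = 1 := by
      rw [← Units.val_pow_eq_pow_val, ← hg, pow_orderOf_eq_one, Units.val_one]
    linear_combination this
  have hg1 : (g : ZMod (p ^ k)) - 1 ≠ 0 := fun h ↦ by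
    rw [sub_eq_zero, Units.val_eq_one] at h
    simp [h] at hg
  have hsum : IsUnit (((g : ZMod (p ^ k)) ^ 2 + g + 1) + (g - 1) * (-g - 2)) := by
    convert h3 using 1
    ring
  refine ⟨g, ?_⟩
  rcases IsLocalRing.isUnit_or_isUnit_of_isUnit_add hsum with h | h
  · exact absurd ((h.mul_left_eq_zero).1 hg3) hg1
  · exact ((isUnit_of_mul_isUnit_left h).mul_right_eq_zero).1 hg3

theorem ZMod.exists_sq_add_self_add_one_eq_zero {n : ℕ} (hn : 0 < n) (h9 : ¬ 9 ∣ n)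
    (h : ∀ p : ℕ, p.Prime → p ∣ n → p = 3 ∨ p % 3 = 1) : ∃ s : ZMod n, s ^ 2 + s + 1 = 0 := by
  induction n using Nat.recOnPosPrimePosCoprime with
  | prime_pow p k hp hk =>
    rcases h p hp (dvd_pow_self p hk.ne') with rfl | hp3
    · have : k = 1 := by
        by_contra hk1
        exact h9 (pow_dvd_pow 3 (show 2 ≤ k by omega))
      subst this
      exact ⟨1, by decide⟩
    · exact exists_sq_add_self_add_one_eq_zero_of_prime_pow hp hp3 hk
  | zero => omega
  | one => exact ⟨0, Subsingleton.elim _ _⟩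
  | coprime a b ha hb hab iha ihb =>
    obtain ⟨s, hs⟩ := iha (by omega) (fun h' ↦ h9 (h'.mul_right b))
      fun p hp hd ↦ h p hp (hd.mul_right b)
    obtain ⟨r, hr⟩ := ihb (by omega) (fun h' ↦ h9 (h'.mul_left a))
      fun p hp hd ↦ h p hp (hd.mul_left a)
    refine ⟨(ZMod.chineseRemainder hab).symm (s, r), ?_⟩
    rw [← map_pow, ← map_add, ← map_one (ZMod.chineseRemainder hab).symm, ← map_add,
      map_eq_zero_iff _ (RingEquiv.injective _)]
    exact Prod.ext hs hr

/-- Hilbert's Theorem 90 for an automorphism of order `3`. -/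
theorem exists_map_eq_mul_of_norm_eq_one {L : Type*} [Field L] (σ : L ≃+* L)
    (hσ : ∀ x, σ (σ (σ x)) = x) (hne : σ ≠ 1) {ξ : L} (hξ : ξ * σ ξ * σ (σ ξ) = 1) :
    ∃ x ≠ 0, σ x = ξ * x := by
  obtain ⟨f, hf⟩ : ∃ f, σ f ≠ f := by
    by_contra! h
    exact hne (RingEquiv.ext h)
  have hf1 : σ (σ f) ≠ σ f := fun h ↦ hf (σ.injective h)
  have hf2 : σ (σ f) ≠ f := fun h ↦ hf ((congrArg σ h).symm.trans (hσ f))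
  have h2 : σ ξ * σ (σ ξ) ≠ 0 := fun h ↦ by
    rw [mul_assoc, h, mul_zero] at hξ
    exact zero_ne_one hξ
  let b (c : L) : L := c + σ ξ * σ (σ ξ) * σ c + σ (σ ξ) * σ (σ c)
  have hb (c : L) : σ (b c) = ξ * b c := by
    simp only [b, map_add, map_mul, hσ]
    linear_combination (- σ c) * hξ
  by_contra! h
  have hb0 (c : L) : b c = 0 := by
    by_contra hc
    exact h _ hc (hb c)
  have e1 := hb0 1
  have e2 := hb0 f
  have e3 := hb0 (f ^ 2)
  simp only [b, map_one, map_pow] at e1 e2 e3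
  have : σ (σ ξ) * ((σ (σ f) - f) * (σ (σ f) - σ f)) = 0 := by
    linear_combination e3 - (f + σ f) * e2 + f * σ f * e1
  simp [sub_eq_zero, hf1, hf2, right_ne_zero_of_mul h2] at this

open IsCyclotomicExtension in
/-- If `s² + s + 1 = 0` modulo `n`, then `ζ ↦ ζ ^ s` is an automorphism of order `3` of the
`n`-th cyclotomic field, with respect to which `ζ` has norm `1`. -/
theorem exists_cyclotomic_aut {n : ℕ} (hn : 3 < n) {s : ZMod n} (hs : s ^ 2 + s + 1 = 0) :
    ∃ (σ : CyclotomicField n ℚ ≃+* CyclotomicField n ℚ) (ζ : CyclotomicField n ℚ),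
      IsPrimitiveRoot ζ n ∧ σ ≠ 1 ∧ (∀ x, σ (σ (σ x)) = x) ∧ ζ * σ ζ * σ (σ ζ) = 1 := by
  have : NeZero n := ⟨by omega⟩
  have : IsCyclotomicExtension {n} ℚ (CyclotomicField n ℚ) :=
    CyclotomicField.isCyclotomicExtension n ℚ
  have hζ : IsPrimitiveRoot (zeta n ℚ (CyclotomicField n ℚ)) n := zeta_spec n ℚ (CyclotomicField n ℚ)
  set ζ := zeta n ℚ (CyclotomicField n ℚ)
  have hpow (a b : ℕ) : ζ ^ a = ζ ^ b ↔ (a : ZMod n) = b := by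
    rw [ZMod.natCast_eq_natCast_iff, (hζ.isOfFinOrder (NeZero.ne n)).pow_eq_pow_iff_modEq,
      ← hζ.eq_orderOf]
  have hsv : ((s.val : ℕ) : ZMod n) = s := ZMod.natCast_zmod_val s
  have hcop : s.val.Coprime n := by
    rw [← ZMod.isUnit_iff_coprime, hsv]
    exact IsUnit.of_mul_eq_one (-s - 1) (by linear_combination -hs)
  let σ := fromZetaAut (hζ.pow_of_coprime _ hcop) (Polynomial.cyclotomic.irreducible_rat (by omega))
  have hσ : σ ζ = ζ ^ s.val := fromZetaAut_spec _ _
  have hσσ : σ (σ ζ) = ζ ^ (s.val * s.val) := by rw [hσ, map_pow, hσ, pow_mul]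
  have h1 : s ≠ 1 := by
    rintro rfl
    have : ((3 : ℕ) : ZMod n) = 0 := by
      push_cast
      linear_combination hs
    rw [ZMod.natCast_eq_zero_iff] at this
    have := Nat.le_of_dvd (by norm_num) this
    omega
  refine ⟨σ, ζ, hζ, fun h ↦ h1 ?_, fun x ↦ ?_, ?_⟩
  · have := (hpow s.val 1).1 (by rw [← hσ, pow_one]; exact RingEquiv.congr_fun h ζ)
    rwa [hsv, Nat.cast_one] at this
  · have : (σ.toAlgHom.comp (σ.toAlgHom.comp σ.toAlgHom)) = AlgHom.id ℚ (CyclotomicField n ℚ) := by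
      apply (hζ.powerBasis ℚ).algHom_ext
      rw [IsPrimitiveRoot.powerBasis_gen]
      change σ (σ (σ ζ)) = ζ
      rw [hσσ, map_pow, hσ, ← pow_mul, ← pow_one ζ, ← pow_mul, hpow]
      push_cast [hsv]
      linear_combination (s - 1) * hs
    exact DFunLike.congr_fun this x
  · change ζ * σ ζ * σ (σ ζ) = 1
    rw [hσσ, hσ, ← pow_succ', ← pow_add, ← pow_zero ζ, hpow]
    push_cast [hsv]
    linear_combination hs

/-- Construction of elements of prescribed order. -/
theorem exists_centralDivAlg_orderOf_eq {n : ℕ} (hn : 3 < n) {s : ZMod n}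
    (hs : s ^ 2 + s + 1 = 0) : ∃ (D : CentralDivAlgChar0) (g : D.Q), orderOf g = n := by
  obtain ⟨σ, ζ, hζ, hne, hσ, hnorm⟩ := exists_cyclotomic_aut hn hs
  obtain ⟨x, hx, hσx⟩ := exists_map_eq_mul_of_norm_eq_one σ hσ hne hnorm
  have : CharZero (HahnSeries ℤ (CyclotomicField n ℚ)) :=
    charZero_of_injective_ringHom (HahnSeries.C_injective (R := CyclotomicField n ℚ))
  refine ⟨_, CubicCyclicDatum.exists_orderOf_eq (CubicCyclicDatum.laurent σ hσ hne)
    (x := HahnSeries.C x) (ξ := HahnSeries.C ζ) (HahnSeries.C_ne_zero hx)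
    (hζ.map_of_injective HahnSeries.C_injective) ?_⟩
  rw [← map_mul, ← hσx]
  exact laurentMap_single σ 0 x

/-- Let `n` be a positive integer. There exist a field `K` of characteristic zero and a
central division algebra `A` of dimension `9` over `K` such that the group `Aˣ/Kˣ` contains
an element of order `n`, if and only if `n` is not divisible by `9` and every prime divisor
of `n` is either `3` or congruent to `1` modulo `3`. -/
theorem stmt_18 (n : ℕ) (hn : 0 < n) :
    (∃ (D : CentralDivAlgChar0) (g : D.Q), orderOf g = n) ↔
      (¬ (9 ∣ n) ∧ ∀ p : ℕ, p.Prime → p ∣ n → p = 3 ∨ p % 3 = 1) := by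
  constructor
  · rintro ⟨D, g, hg⟩
    exact orderOf_restriction D.center_eq_bot D.finrank_eq_nine hn hg
  · rintro ⟨h9, hp⟩
    obtain ⟨s, hs⟩ := ZMod.exists_sq_add_self_add_one_eq_zero (n := 7 * n) (by omega) (by omega)
      fun p hpp hd ↦ by
        rcases hpp.dvd_mul.1 hd with h | h
        · rw [(Nat.prime_dvd_prime_iff_eq hpp (by norm_num)).1 h]
          norm_num
        · exact hp p hpp h
    obtain ⟨D, g, hg⟩ := exists_centralDivAlg_orderOf_eq (by omega) hs
    refine ⟨D, g ^ 7, ?_⟩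
    rw [orderOf_pow_of_dvd (by norm_num) (hg ▸ Dvd.intro n rfl), hg]
    simp
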